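/- arXiv:2009.03549 — 3 statements merged into one kernel-verified Lean document; each statement's English description precedes it below -/
import Mathlib

section
/- For every real number r > 0 and every real α with −r < α < r, one has ∫₀^∞ (u/(1+u²))^r · u^{α−1} du ≤ 2r/(r² − α²). -/
open MeasureTheory

/-!
Since `1 + u² ≥ max 1 (u²)`, the kernel `u / (1 + u²)` is at most `min u u⁻¹`. The integrand is
therefore bounded by `u ^ (r + α - 1)` on `(0, 1]` and by `u ^ (α - r - 1)` on `(1, ∞)`, whose
integrals are `1 / (r + α)` and `1 / (r - α)`; these add up to `2r / (r² - α²)`.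
-/

lemma lintegral_Ioc_zero_one_rpow (s : ℝ) (hs : 0 < s) :
    ∫⁻ u in Set.Ioc (0 : ℝ) 1, ENNReal.ofReal (u ^ (s - 1)) = ENNReal.ofReal (1 / s) := by
  have hint : IntegrableOn (fun u : ℝ => u ^ (s - 1)) (Set.Ioc 0 1) :=
    (intervalIntegrable_iff_integrableOn_Ioc_of_le zero_le_one).1
      (intervalIntegral.intervalIntegrable_rpow' (by linarith))
  rw [← ofReal_integral_eq_lintegral_ofReal hint, ← intervalIntegral.integral_of_le zero_le_one,
    integral_rpow (Or.inl (by linarith))]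
  · simp [Real.zero_rpow hs.ne']
  · filter_upwards [ae_restrict_mem measurableSet_Ioc] with u hu
    exact Real.rpow_nonneg hu.1.le _

lemma lintegral_Ioi_one_rpow (s : ℝ) (hs : 0 < s) :
    ∫⁻ u in Set.Ioi (1 : ℝ), ENNReal.ofReal (u ^ (-s - 1)) = ENNReal.ofReal (1 / s) := by
  have hint : IntegrableOn (fun u : ℝ => u ^ (-s - 1)) (Set.Ioi 1) :=
    integrableOn_Ioi_rpow_of_lt (by linarith) one_pos
  rw [← ofReal_integral_eq_lintegral_ofReal hint,
    integral_Ioi_rpow_of_lt (by linarith) one_pos]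
  · simp
  · filter_upwards [ae_restrict_mem measurableSet_Ioi] with u hu
    exact Real.rpow_nonneg (zero_le_one.trans (le_of_lt hu)) _

/-- For every real `r > 0` and every real `α` with `-r < α < r`,
`∫₀^∞ (u/(1+u²))^r · u^{α−1} du ≤ 2r/(r² − α²)`. -/
theorem stmt0 (r α : ℝ) (hr : 0 < r) (hα₁ : -r < α) (hα₂ : α < r) :
    ∫⁻ u in Set.Ioi (0 : ℝ),
        ENNReal.ofReal ((u / (1 + u ^ 2)) ^ r * u ^ (α - 1)) ≤
      ENNReal.ofReal (2 * r / (r ^ 2 - α ^ 2)) := by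
  have h1 : 0 < r + α := by linarith
  have h2 : 0 < r - α := by linarith
  have hsum : 2 * r / (r ^ 2 - α ^ 2) = 1 / (r + α) + 1 / (r - α) := by
    rw [show r ^ 2 - α ^ 2 = (r + α) * (r - α) by ring]
    field_simp
    ring
  rw [hsum, ENNReal.ofReal_add (by positivity) (by positivity),
    ← lintegral_Ioc_zero_one_rpow _ h1, ← lintegral_Ioi_one_rpow _ h2,
    ← Set.Ioc_union_Ioi_eq_Ioi (zero_le_one (α := ℝ))]
  refine (lintegral_union_le _ _ _).trans (add_le_add ?_ ?_)
  · refine setLIntegral_mono' measurableSet_Ioc fun u hu => ENNReal.ofReal_le_ofReal ?_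
    have hu0 : 0 < u := hu.1
    have hk : u / (1 + u ^ 2) ≤ u := div_le_self hu0.le (by nlinarith)
    calc (u / (1 + u ^ 2)) ^ r * u ^ (α - 1) ≤ u ^ r * u ^ (α - 1) := by gcongr
      _ = u ^ (r + α - 1) := by rw [← Real.rpow_add hu0]; congr 1; ring
  · refine setLIntegral_mono' measurableSet_Ioi fun u hu => ENNReal.ofReal_le_ofReal ?_
    have hu0 : 0 < u := one_pos.trans hu
    have hk : u / (1 + u ^ 2) ≤ u⁻¹ := by
      rw [div_le_iff₀ (by positivity), inv_mul_eq_div, le_div_iff₀ hu0]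
      nlinarith
    calc (u / (1 + u ^ 2)) ^ r * u ^ (α - 1) ≤ u⁻¹ ^ r * u ^ (α - 1) := by gcongr
      _ = u ^ (-(r - α) - 1) := by
        rw [Real.inv_rpow hu0.le, ← Real.rpow_neg hu0.le, ← Real.rpow_add hu0]
        congr 1; ring
end

section
/- Let r > 0, let α ∈ (−r, r), let q ∈ [1,∞], and let f : (0,1] → ℝ be measurable. Then ‖ u ↦ u^{−α} ∫₀¹ (tu/(t+u)²)^r |f(t)| dt/t ‖_{L^q((0,1], du/u)} ≤ (2r/(r² − α²)) · ‖ u ↦ u^{−α} f(u) ‖_{L^q((0,1], du/u)}. -/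
/-!
This is Schur's test. With `g(t) = t^{-α} |f(t)|` the function on the left is
`u ↦ ∫ K(u,t) g(t) dt/t`, where `K(u,t) = (t/u)^α (tu/(t+u)²)^r`. Since
`tu/(t+u)² ≤ min(t/u, u/t)`, the integral of `K(u, ·)` against `dt/t` is at most
`∫₀^u (t/u)^{α+r} dt/t + ∫_u^∞ (t/u)^{α-r} dt/t = 1/(r+α) + 1/(r-α) = 2r/(r²-α²)`
(`lintegral_schurKernel_le`). Exchanging `t` and `u` amounts to replacing `α` by `-α`, so the
integrals in the other variable obey the same bound. Schur's test (`schur_test`) for `q < ∞`, and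
the row bound alone for `q = ∞`, give the claim.
-/

open MeasureTheory
open scoped ENNReal NNReal

/-- The measure `dt/t` on the interval `(0,1] ⊆ ℝ`. -/
noncomputable def haarIoc : Measure ℝ :=
  (volume.restrict (Set.Ioc (0 : ℝ) 1)).withDensity fun t => ENNReal.ofReal t⁻¹

/-- The `L^q` norm on `(0,1]` with respect to the measure `dt/t`, for `q ∈ [1,∞]`:
the essential supremum if `q = ∞`, and `(∫₀¹ g(t)^q dt/t)^{1/q}` otherwise. -/
noncomputable def lqNorm (q : ℝ≥0∞) (g : ℝ → ℝ≥0∞) : ℝ≥0∞ :=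
  if q = ⊤ then essSup g haarIoc
  else (∫⁻ t, g t ^ q.toReal ∂haarIoc) ^ (1 / q.toReal)

/-- Schur's test for a nonnegative kernel whose row and column integrals are bounded by the same
constant, in `L^p` with `1 ≤ p < ∞`. -/
lemma schur_test {X : Type*} [MeasurableSpace X] (μ : Measure X) [SFinite μ]
    (K : X → X → ℝ≥0∞) (hK : Measurable (Function.uncurry K)) (g : X → ℝ≥0∞) (hg : Measurable g)
    (C : ℝ≥0∞) (hrow : ∀ᵐ u ∂μ, ∫⁻ t, K u t ∂μ ≤ C) (hcol : ∀ᵐ t ∂μ, ∫⁻ u, K u t ∂μ ≤ C)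
    (p : ℝ) (hp : 1 ≤ p) :
    (∫⁻ u, (∫⁻ t, K u t * g t ∂μ) ^ p ∂μ) ^ (1 / p) ≤
      C * (∫⁻ t, g t ^ p ∂μ) ^ (1 / p) := by
  have hp0 : 0 < p := by linarith
  have hip : p⁻¹ ≤ 1 := inv_le_one_of_one_le₀ hp
  have hKu : ∀ u, Measurable (K u) := fun u => hK.comp measurable_prodMk_left
  have hKt : ∀ t, Measurable fun u => K u t := fun t => hK.comp measurable_prodMk_right
  -- Hölder with the weight `K u t`: `K g = K^{1 - 1/p} (K g^p)^{1/p}`.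
  have hholder : ∀ u, (∫⁻ t, K u t * g t ∂μ) ^ p ≤
      (∫⁻ t, K u t ∂μ) ^ (p - 1) * ∫⁻ t, K u t * g t ^ p ∂μ := by
    intro u
    have h := ENNReal.lintegral_mul_norm_pow_le (μ := μ) (f := K u)
      (g := fun t => K u t * g t ^ p) (hKu u).aemeasurable
      ((hKu u).mul (hg.pow_const p)).aemeasurable (p := 1 - p⁻¹) (q := p⁻¹)
      (by linarith) (by positivity) (by ring)
    have heq : ∀ t, K u t ^ (1 - p⁻¹) * (K u t * g t ^ p) ^ p⁻¹ = K u t * g t := by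
      intro t
      rw [ENNReal.mul_rpow_of_nonneg _ _ (by positivity), ← ENNReal.rpow_mul,
        mul_inv_cancel₀ hp0.ne', ENNReal.rpow_one, ← mul_assoc,
        ← ENNReal.rpow_add_of_nonneg _ _ (by linarith) (by positivity)]
      simp
    simp only [heq] at h
    refine (ENNReal.rpow_le_rpow h hp0.le).trans_eq ?_
    rw [ENNReal.mul_rpow_of_nonneg _ _ hp0.le, ← ENNReal.rpow_mul, ← ENNReal.rpow_mul,
      inv_mul_cancel₀ hp0.ne', ENNReal.rpow_one]
    congr 2
    field_simp
  have hmain : ∫⁻ u, (∫⁻ t, K u t * g t ∂μ) ^ p ∂μ ≤ C ^ p * ∫⁻ t, g t ^ p ∂μ := by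
    have hprod : Measurable (Function.uncurry fun u t => K u t * g t ^ p) :=
      hK.mul ((hg.pow_const p).comp measurable_snd)
    calc ∫⁻ u, (∫⁻ t, K u t * g t ∂μ) ^ p ∂μ
        ≤ ∫⁻ u, C ^ (p - 1) * ∫⁻ t, K u t * g t ^ p ∂μ ∂μ := by
          refine lintegral_mono_ae ?_
          filter_upwards [hrow] with u hu
          refine (hholder u).trans ?_
          gcongr
      _ = C ^ (p - 1) * ∫⁻ t, (∫⁻ u, K u t ∂μ) * g t ^ p ∂μ := by
          rw [lintegral_const_mul _ (Measurable.lintegral_prod_right hprod), lintegral_lintegral_swap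
            hprod.aemeasurable]
          congr 1
          refine lintegral_congr fun t => ?_
          rw [lintegral_mul_const _ (hKt t)]
      _ ≤ C ^ (p - 1) * ∫⁻ t, C * g t ^ p ∂μ := by
          refine mul_le_mul_right (lintegral_mono_ae ?_) _
          filter_upwards [hcol] with t ht
          gcongr
      _ = C ^ p * ∫⁻ t, g t ^ p ∂μ := by
          rw [lintegral_const_mul _ (hg.pow_const p), ← mul_assoc]
          congr 1
          nth_rewrite 2 [← ENNReal.rpow_one C]
          rw [← ENNReal.rpow_add_of_nonneg _ _ (by linarith) (by norm_num)]
          simp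
  refine (ENNReal.rpow_le_rpow hmain (by positivity)).trans_eq ?_
  rw [ENNReal.mul_rpow_of_nonneg _ _ (by positivity), ← ENNReal.rpow_mul,
    mul_one_div_cancel hp0.ne', ENNReal.rpow_one]

/-- The kernel `(t/u)^α (tu/(t+u)²)^r` of the operator after conjugation by the weight `u^{-α}`. -/
noncomputable def schurKernel (r α u t : ℝ) : ℝ≥0∞ :=
  ENNReal.ofReal ((t / u) ^ α * (t * u / (t + u) ^ 2) ^ r)

lemma measurable_schurKernel (r α : ℝ) : Measurable (Function.uncurry (schurKernel r α)) := by
  unfold schurKernel Function.uncurry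
  fun_prop

lemma schurKernel_swap (r α : ℝ) {u t : ℝ} (hu : 0 < u) (ht : 0 < t) :
    schurKernel r α u t = schurKernel r (-α) t u := by
  unfold schurKernel
  rw [Real.rpow_neg (by positivity), ← Real.inv_rpow (by positivity), inv_div, mul_comm t u,
    add_comm t u]

lemma lintegral_haarIoc {F : ℝ → ℝ≥0∞} (hF : Measurable F) :
    ∫⁻ t, F t ∂haarIoc = ∫⁻ t in Set.Ioc (0 : ℝ) 1, F t * ENNReal.ofReal t⁻¹ := by
  unfold haarIoc
  rw [lintegral_withDensity_eq_lintegral_mul _ (by fun_prop) hF]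
  simp only [Pi.mul_apply, mul_comm]

lemma ae_haarIoc : ∀ᵐ t ∂haarIoc, t ∈ Set.Ioc (0 : ℝ) 1 :=
  (withDensity_absolutelyContinuous _ _).ae_le (ae_restrict_mem measurableSet_Ioc)

instance : SFinite haarIoc := by
  unfold haarIoc
  infer_instance

lemma lintegral_Ioc_rpow {u s : ℝ} (hu : 0 < u) (hs : 0 < s) :
    ∫⁻ t in Set.Ioc 0 u, ENNReal.ofReal (u ^ (-s) * t ^ (s - 1)) = ENNReal.ofReal (1 / s) := by
  have hint : IntegrableOn (fun t : ℝ => t ^ (s - 1)) (Set.Ioc 0 u) :=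
    (intervalIntegrable_iff_integrableOn_Ioc_of_le hu.le).1
      (intervalIntegral.intervalIntegrable_rpow' (by linarith))
  rw [← ofReal_integral_eq_lintegral_ofReal (hint.const_mul _)]
  · rw [integral_const_mul, ← intervalIntegral.integral_of_le hu.le,
      integral_rpow (Or.inl (by linarith)), sub_add_cancel, Real.zero_rpow hs.ne', sub_zero,
      Real.rpow_neg hu.le]
    have := (Real.rpow_pos_of_pos hu s).ne'
    congr 1
    field_simp
  · filter_upwards [ae_restrict_mem measurableSet_Ioc] with t ht
    have := ht.1
    simp only [Pi.zero_apply]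
    positivity

lemma lintegral_Ioi_rpow {u s : ℝ} (hu : 0 < u) (hs : 0 < s) :
    ∫⁻ t in Set.Ioi u, ENNReal.ofReal (u ^ s * t ^ (-s - 1)) = ENNReal.ofReal (1 / s) := by
  have hint : IntegrableOn (fun t : ℝ => t ^ (-s - 1)) (Set.Ioi u) :=
    integrableOn_Ioi_rpow_of_lt (by linarith) hu
  rw [← ofReal_integral_eq_lintegral_ofReal (hint.const_mul _)]
  · rw [integral_const_mul, integral_Ioi_rpow_of_lt (by linarith) hu, sub_add_cancel,
      Real.rpow_neg hu.le]
    have := (Real.rpow_pos_of_pos hu s).ne'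
    congr 1
    field_simp
  · filter_upwards [ae_restrict_mem measurableSet_Ioi] with t ht
    have : 0 < t := hu.trans ht
    simp only [Pi.zero_apply]
    positivity

/-- The row bound: `tu/(t+u)² ≤ t/u` is used on `(0,u]` and `tu/(t+u)² ≤ u/t` beyond `u`. -/
lemma lintegral_schurKernel_le {r α u : ℝ} (hα₁ : -r < α) (hα₂ : α < r) (hr : 0 < r)
    (hu : u ∈ Set.Ioc (0 : ℝ) 1) :
    ∫⁻ t, schurKernel r α u t ∂haarIoc ≤ ENNReal.ofReal (2 * r / (r ^ 2 - α ^ 2)) := by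
  obtain ⟨hu0, hu1⟩ := hu
  have hmeas : Measurable (schurKernel r α u) :=
    (measurable_schurKernel r α).comp measurable_prodMk_left
  have hconst : 2 * r / (r ^ 2 - α ^ 2) = 1 / (r + α) + 1 / (r - α) := by
    have h1 : r + α ≠ 0 := by linarith
    have h2 : r - α ≠ 0 := by linarith
    have h3 : r ^ 2 - α ^ 2 ≠ 0 := by
      rw [sq_sub_sq]
      exact mul_ne_zero h1 h2
    field_simp
    ring
  rw [lintegral_haarIoc hmeas, ← Set.Ioc_union_Ioc_eq_Ioc hu0.le hu1, hconst,
    ENNReal.ofReal_add (one_div_nonneg.2 (by linarith)) (one_div_nonneg.2 (by linarith)),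
    ← lintegral_Ioc_rpow hu0 (by linarith : 0 < r + α),
    ← lintegral_Ioi_rpow hu0 (by linarith : 0 < r - α)]
  refine (lintegral_union_le _ _ _).trans (add_le_add ?_ ?_)
  · refine setLIntegral_mono' measurableSet_Ioc fun t ht => ?_
    have ht0 : 0 < t := ht.1
    unfold schurKernel
    rw [← ENNReal.ofReal_mul (by positivity)]
    refine ENNReal.ofReal_le_ofReal ?_
    have hle : t * u / (t + u) ^ 2 ≤ t / u := by
      rw [div_le_div_iff₀ (by positivity) hu0]
      nlinarith [mul_pos ht0 hu0, mul_pos ht0 (mul_pos ht0 ht0), mul_pos ht0 (mul_pos ht0 hu0)]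
    calc (t / u) ^ α * (t * u / (t + u) ^ 2) ^ r * t⁻¹
        ≤ (t / u) ^ α * (t / u) ^ r * t⁻¹ := by gcongr
      _ = u ^ (-(r + α)) * t ^ (r + α - 1) := by
          rw [← Real.rpow_add (by positivity), Real.div_rpow ht0.le hu0.le, Real.rpow_neg hu0.le,
            Real.rpow_sub_one ht0.ne', add_comm α r]
          field_simp
  · refine (setLIntegral_mono' measurableSet_Ioc fun t ht => ?_).trans
      (lintegral_mono_set Set.Ioc_subset_Ioi_self)
    have ht0 : 0 < t := hu0.trans ht.1
    unfold schurKernel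
    rw [← ENNReal.ofReal_mul (by positivity)]
    refine ENNReal.ofReal_le_ofReal ?_
    have hle : t * u / (t + u) ^ 2 ≤ (t / u)⁻¹ := by
      rw [inv_div, div_le_div_iff₀ (by positivity) ht0]
      nlinarith [mul_pos ht0 hu0, mul_pos hu0 (mul_pos hu0 hu0), mul_pos hu0 (mul_pos ht0 hu0)]
    calc (t / u) ^ α * (t * u / (t + u) ^ 2) ^ r * t⁻¹
        ≤ (t / u) ^ α * ((t / u)⁻¹) ^ r * t⁻¹ := by gcongr
      _ = u ^ (r - α) * t ^ (-(r - α) - 1) := by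
          rw [Real.inv_rpow (by positivity), ← Real.rpow_neg (by positivity),
            ← Real.rpow_add (by positivity), Real.rpow_sub_one ht0.ne',
            show α + -r = -(r - α) by ring, Real.rpow_neg (by positivity),
            Real.div_rpow ht0.le hu0.le, Real.rpow_neg ht0.le]
          field_simp

/-- Let `r > 0`, `α ∈ (−r, r)`, `q ∈ [1,∞]` and `f : (0,1] → ℝ` measurable. Then
`‖ u ↦ u^{−α} ∫₀¹ (tu/(t+u)²)^r |f(t)| dt/t ‖_{L^q((0,1], du/u)}
  ≤ (2r/(r² − α²)) · ‖ u ↦ u^{−α} f(u) ‖_{L^q((0,1], du/u)}`. -/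
theorem stmt1 (r α : ℝ) (hr : 0 < r) (hα₁ : -r < α) (hα₂ : α < r)
    (q : ℝ≥0∞) (hq : 1 ≤ q) (f : ℝ → ℝ) (hf : Measurable f) :
    lqNorm q (fun u => ENNReal.ofReal (u ^ (-α)) *
        ∫⁻ t in Set.Ioc (0 : ℝ) 1,
          ENNReal.ofReal ((t * u / (t + u) ^ 2) ^ r * |f t|) * ENNReal.ofReal t⁻¹) ≤
      ENNReal.ofReal (2 * r / (r ^ 2 - α ^ 2)) *
        lqNorm q (fun u => ENNReal.ofReal (u ^ (-α) * |f u|)) := by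
  set g : ℝ → ℝ≥0∞ := fun u => ENNReal.ofReal (u ^ (-α) * |f u|) with hg
  have hgm : Measurable g := by fun_prop
  set C := ENNReal.ofReal (2 * r / (r ^ 2 - α ^ 2)) with hC
  have hrow : ∀ᵐ u ∂haarIoc, ∫⁻ t, schurKernel r α u t ∂haarIoc ≤ C := by
    filter_upwards [ae_haarIoc] with u hu
    exact lintegral_schurKernel_le hα₁ hα₂ hr hu
  have hcol : ∀ᵐ t ∂haarIoc, ∫⁻ u, schurKernel r α u t ∂haarIoc ≤ C := by
    filter_upwards [ae_haarIoc] with t ht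
    have hswap : ∫⁻ u, schurKernel r α u t ∂haarIoc = ∫⁻ u, schurKernel r (-α) t u ∂haarIoc := by
      refine lintegral_congr_ae ?_
      filter_upwards [ae_haarIoc] with u hu
      exact schurKernel_swap r α hu.1 ht.1
    rw [hswap, hC, ← neg_sq α]
    exact lintegral_schurKernel_le (by linarith) (by linarith) hr ht
  have hKu : ∀ u, Measurable (schurKernel r α u) := fun u =>
    (measurable_schurKernel r α).comp measurable_prodMk_left
  have hrepr : (fun u => ENNReal.ofReal (u ^ (-α)) * ∫⁻ t in Set.Ioc (0 : ℝ) 1,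
      ENNReal.ofReal ((t * u / (t + u) ^ 2) ^ r * |f t|) * ENNReal.ofReal t⁻¹) =ᵐ[haarIoc]
      fun u => ∫⁻ t, schurKernel r α u t * g t ∂haarIoc := by
    filter_upwards [ae_haarIoc] with u hu
    have hu0 := hu.1
    rw [lintegral_haarIoc (F := fun t => schurKernel r α u t * g t) ((hKu u).mul hgm),
      ← lintegral_const_mul _ (by fun_prop)]
    refine setLIntegral_congr_fun measurableSet_Ioc fun t ht => ?_
    have ht0 := ht.1
    simp only [hg, schurKernel]
    rw [← mul_assoc, ← ENNReal.ofReal_mul (p := u ^ (-α)) (by positivity),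
      ← ENNReal.ofReal_mul (p := (t / u) ^ α * (t * u / (t + u) ^ 2) ^ r) (by positivity)]
    congr 2
    rw [Real.div_rpow ht0.le hu0.le, Real.rpow_neg hu0.le, Real.rpow_neg ht0.le]
    have := (Real.rpow_pos_of_pos ht0 α).ne'
    field_simp
  unfold lqNorm
  split_ifs with hqt
  · rw [essSup_congr_ae hrepr]
    refine essSup_le_of_ae_le _ ?_
    filter_upwards [hrow] with u hu
    calc ∫⁻ t, schurKernel r α u t * g t ∂haarIoc
        ≤ ∫⁻ t, schurKernel r α u t * essSup g haarIoc ∂haarIoc := by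
          refine lintegral_mono_ae ?_
          filter_upwards [ENNReal.ae_le_essSup g] with t ht
          gcongr
      _ = (∫⁻ t, schurKernel r α u t ∂haarIoc) * essSup g haarIoc :=
          lintegral_mul_const _ (hKu u)
      _ ≤ C * essSup g haarIoc := by gcongr
  · have hq1 : 1 ≤ q.toReal := by
      simpa using ENNReal.toReal_mono hqt hq
    refine (congrArg (· ^ (1 / q.toReal))
      (lintegral_congr_ae (hrepr.fun_comp (· ^ q.toReal)))).trans_le ?_
    exact schur_test haarIoc (schurKernel r α) (measurable_schurKernel r α) g hgm C hrow hcol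
      q.toReal hq1
end

section
/- There exists ℓ₀ > 0, depending only on the doubling constant C_D, such that for every ℓ ≥ ℓ₀ and every c > 0 there exist a constant c' > 0 and a constant C ≥ 0 with the following property: for all s, t ∈ (0,1] and all x, z ∈ M, ∫_M G_t^{c,ℓ}(x,y) · G_s^{c,ℓ}(y,z) μ(dy) ≤ C · G_{t+s}^{c',ℓ}(x,z). -/
/-!
Write `V(x,t) = μ(B(x,√t))` and `τ = t + s`. Doubling gives the comparison
`V(x,τ) ≤ K ((τ + d(x,y)²)/t)^N V(y,t)` for `t ≤ τ` (`vol_compare`), where `C_D ≤ 4 ^ N`.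
The factor `1 + c d²/t` is comparable to `1 + d²/t`, so it suffices to treat `c = c' = 1`.

The core is the pointwise bound `pointwise_bound`: with
`H_t(x,y) = V(x,t)⁻¹ (1 + d(x,y)²/t)^{-(N+1)}`,
`G_t(x,y) G_s(y,z) ≤ C G_τ(x,z) (H_t(x,y) + H_s(z,y))`.
Since `d(x,z) ≤ d(x,y) + d(y,z)`, one of the two distances is at least `d(x,z)/2`, and the kernel
carrying that distance supplies the full decay `(1 + d(x,z)²/τ)^{-ℓ}`; the volume at scale `τ`
is obtained from that same kernel, recentred at `x` if necessary. If its time is the smaller one, the volume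
comparison costs a power of `τ/t` (or `τ/s`), which is paid for by the decay when `d(x,z)² > τ`;
when `d(x,z)² ≤ τ` no decay is needed and the kernel with the larger time supplies the volume.
Recentring from `y` to `x` costs `(1 + d(x,y)²/t)^N`, absorbed by the other kernel `G_t(x,y)`. If
the remaining kernel is `G_s(y,z)`, it is recentred at `z` at the cost of `(1 + d(y,z)²/s)^N`.
Either way `ℓ ≥ 2N + 1` leaves the integrable power `N + 1`.

Finally `∫ H_t(x,y) μ(dy)` is bounded by a dyadic decomposition (`lintegral_H_le`).
-/

open MeasureTheory Metric
open scoped ENNReal NNReal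

/-- The Gaussian-type kernel `G_t^{c,ℓ}(x,y) := μ(B(x,√t))⁻¹ · (1 + c·d(x,y)²/t)^{−ℓ}`. -/
noncomputable def Gker {M : Type*} [MetricSpace M] [MeasurableSpace M]
    (μ : Measure M) (c ℓ t : ℝ) (x y : M) : ℝ :=
  ((μ (ball x (Real.sqrt t))).toReal)⁻¹ * (1 + c * dist x y ^ 2 / t) ^ (-ℓ)

lemma doubling_pow {M : Type*} [MetricSpace M] [MeasurableSpace M] {μ : Measure M} {C_D : ℝ≥0}
    (hd : ∀ (x : M) (ρ : ℝ), 0 < ρ → μ (ball x (2 * ρ)) ≤ C_D * μ (ball x ρ))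
    (x : M) {r : ℝ} (hr : 0 < r) (k : ℕ) :
    μ (ball x (2 ^ k * r)) ≤ (C_D : ℝ≥0∞) ^ k * μ (ball x r) := by
  induction k with
  | zero => simp
  | succ k ih =>
    calc μ (ball x (2 ^ (k + 1) * r)) = μ (ball x (2 * (2 ^ k * r))) := by ring_nf
      _ ≤ C_D * μ (ball x (2 ^ k * r)) := hd x _ (by positivity)
      _ ≤ C_D * ((C_D : ℝ≥0∞) ^ k * μ (ball x r)) := by gcongr
      _ = _ := by ring

lemma doubling_ratio {M : Type*} [MetricSpace M] [MeasurableSpace M] {μ : Measure M} {C_D : ℝ≥0}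
    (hfin : ∀ (x : M) (ρ : ℝ), 0 < ρ → 0 < μ (ball x ρ) ∧ μ (ball x ρ) < ⊤)
    (hd : ∀ (x : M) (ρ : ℝ), 0 < ρ → μ (ball x (2 * ρ)) ≤ C_D * μ (ball x ρ))
    {N : ℕ} (hN : (C_D : ℝ) ≤ 4 ^ N)
    (x : M) {r R : ℝ} (hr : 0 < r) (hR : r ≤ R) :
    (μ (ball x R)).toReal ≤ C_D * ((R / r) ^ 2) ^ N * (μ (ball x r)).toReal := by
  obtain ⟨k, hk1, hk2⟩ := exists_nat_pow_near ((one_le_div hr).2 hR) (one_lt_two (α := ℝ))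
  have hsub : R ≤ 2 ^ (k + 1) * r := ((div_lt_iff₀ hr).1 hk2).le
  have h1 : μ (ball x R) ≤ (C_D : ℝ≥0∞) ^ (k + 1) * μ (ball x r) :=
    (measure_mono (ball_subset_ball hsub)).trans (doubling_pow hd x hr _)
  have h2 : (μ (ball x R)).toReal ≤ (C_D : ℝ) ^ (k + 1) * (μ (ball x r)).toReal := by
    have := ENNReal.toReal_mono
      (ENNReal.mul_ne_top (ENNReal.pow_ne_top ENNReal.coe_ne_top) (hfin x r hr).2.ne) h1
    simpa using this
  refine h2.trans ?_
  gcongr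
  calc (C_D : ℝ) ^ (k + 1) = C_D * (C_D : ℝ) ^ k := by ring
    _ ≤ C_D * (4 ^ N) ^ k := by gcongr
    _ = C_D * ((2 ^ k) ^ 2) ^ N := by
        congr 1
        rw [show (4 : ℝ) = 2 ^ 2 by norm_num]
        simp only [← pow_mul]
        congr 1
        ring
    _ ≤ C_D * ((R / r) ^ 2) ^ N := by gcongr

/-- Comparison of the volumes of balls with different centres and scales. -/
lemma vol_compare {M : Type*} [MetricSpace M] [MeasurableSpace M] {μ : Measure M} {C_D : ℝ≥0}
    (hfin : ∀ (x : M) (ρ : ℝ), 0 < ρ → 0 < μ (ball x ρ) ∧ μ (ball x ρ) < ⊤)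
    (hd : ∀ (x : M) (ρ : ℝ), 0 < ρ → μ (ball x (2 * ρ)) ≤ C_D * μ (ball x ρ))
    {N : ℕ} (hN : (C_D : ℝ) ≤ 4 ^ N)
    (x y : M) {t τ : ℝ} (ht : 0 < t) (hτ : t ≤ τ) :
    (μ (ball x √τ)).toReal ≤
      (C_D * 2 ^ N) * ((τ + dist x y ^ 2) / t) ^ N * (μ (ball y √t)).toReal := by
  have hτ0 : 0 < τ := ht.trans_le hτ
  have hp : 0 ≤ dist x y := dist_nonneg
  have h0 : 0 < √τ := Real.sqrt_pos.2 hτ0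
  have hsub : ball x √τ ⊆ ball y (√τ + dist x y) := ball_subset_ball' le_rfl
  have h1 : (μ (ball x √τ)).toReal ≤ (μ (ball y (√τ + dist x y))).toReal :=
    ENNReal.toReal_mono (hfin y _ (by positivity)).2.ne (measure_mono hsub)
  have h2 := doubling_ratio hfin hd hN y (Real.sqrt_pos.2 ht)
    (R := √τ + dist x y) ((Real.sqrt_le_sqrt hτ).trans (by linarith))
  refine h1.trans (h2.trans ?_)
  rw [mul_assoc (C_D : ℝ) (2 ^ N), ← mul_pow]
  gcongr
  rw [div_pow, Real.sq_sqrt ht.le, ← mul_div_assoc]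
  gcongr
  nlinarith [Real.sq_sqrt hτ0.le, sq_nonneg (√τ - dist x y)]

lemma rpow_neg_le_of_le_mul {P W a ℓ : ℝ} (hP : 0 < P) (hW : 0 < W) (ha : 0 < a) (hℓ : 0 ≤ ℓ)
    (h : W ≤ a * P) : P ^ (-ℓ) ≤ a ^ ℓ * W ^ (-ℓ) := by
  have h1 : (a * P) ^ (-ℓ) ≤ W ^ (-ℓ) :=
    Real.rpow_le_rpow_of_nonpos hW h (by linarith)
  rw [Real.mul_rpow ha.le hP.le] at h1
  calc P ^ (-ℓ) = a ^ ℓ * (a ^ (-ℓ) * P ^ (-ℓ)) := by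
        rw [← mul_assoc, ← Real.rpow_add ha]; simp
    _ ≤ _ := by gcongr

lemma pow_mul_rpow_neg_le {P W g ℓ : ℝ} {N : ℕ} (hP : 0 < P) (hW : 0 < W) (hg : 1 ≤ g)
    (hℓ : (N : ℝ) ≤ ℓ) (h : g * W ≤ 8 * P) : g ^ N * P ^ (-ℓ) ≤ 8 ^ ℓ * W ^ (-ℓ) := by
  have hg0 : 0 < g := by linarith
  have hℓ0 : 0 ≤ ℓ := (Nat.cast_nonneg N).trans hℓ
  have h1 := rpow_neg_le_of_le_mul hP (mul_pos hg0 hW) (by norm_num : (0 : ℝ) < 8) hℓ0 h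
  rw [Real.mul_rpow hg0.le hW.le] at h1
  have h2 : g ^ N * g ^ (-ℓ) ≤ 1 := by
    rw [← Real.rpow_natCast, ← Real.rpow_add hg0]
    exact Real.rpow_le_one_of_one_le_of_nonpos hg (by linarith)
  have hw : 0 ≤ 8 ^ ℓ * W ^ (-ℓ) := by positivity
  calc g ^ N * P ^ (-ℓ) ≤ g ^ N * (8 ^ ℓ * (g ^ (-ℓ) * W ^ (-ℓ))) := by gcongr
    _ = (g ^ N * g ^ (-ℓ)) * (8 ^ ℓ * W ^ (-ℓ)) := by ring
    _ ≤ 1 * (8 ^ ℓ * W ^ (-ℓ)) := by gcongr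
    _ = _ := one_mul _

lemma rpow_absorb {P ℓ : ℝ} {N : ℕ} (hP : 1 ≤ P) (hℓ : 2 * (N : ℝ) + 1 ≤ ℓ) :
    P ^ N * P ^ (-ℓ) ≤ (P ^ (N + 1))⁻¹ := by
  have hP0 : 0 < P := by linarith
  rw [← Real.rpow_natCast, ← Real.rpow_natCast, ← Real.rpow_add hP0, ← Real.rpow_neg hP0.le]
  apply Real.rpow_le_rpow_of_exponent_le hP
  push_cast
  linarith

lemma inv_le_of_le_mul {V A k : ℝ} (hV : 0 < V) (hA : 0 < A) (h : V ≤ k * A) :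
    A⁻¹ ≤ k * V⁻¹ := by
  rw [← div_eq_mul_inv, le_div_iff₀ hV, inv_mul_le_iff₀ hA]
  linarith

/-- The pointwise estimate with the geometry stripped off: `A`, `B`, `Z`, `V` stand for the volumes
`V(x,t)`, `V(y,s)`, `V(z,s)`, `V(x,t+s)`, and `p`, `q`, `D` for the distances
`d(x,y)`, `d(y,z)`, `d(x,z)`. -/
lemma pointwise_bound {A B Z V K p q D s t ℓ : ℝ} {N : ℕ}
    (hA : 0 < A) (hB : 0 < B) (hZ : 0 < Z) (hV : 0 < V) (hK : 1 ≤ K)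
    (hD : 0 ≤ D) (hs : 0 < s) (ht : 0 < t)
    (hℓ : 2 * (N : ℝ) + 1 ≤ ℓ) (hDpq : D ≤ p + q)
    (h1 : V ≤ K * ((t + s) / t) ^ N * A)
    (h2 : V ≤ K * ((t + s + p ^ 2) / s) ^ N * B)
    (h3 : Z ≤ K * (1 + q ^ 2 / s) ^ N * B) :
    (A⁻¹ * (1 + p ^ 2 / t) ^ (-ℓ)) * (B⁻¹ * (1 + q ^ 2 / s) ^ (-ℓ)) ≤
      (K ^ 2 * (2 ^ N * 8 ^ ℓ)) * (V⁻¹ * (1 + D ^ 2 / (t + s)) ^ (-ℓ)) *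
        (A⁻¹ * ((1 + p ^ 2 / t) ^ (N + 1))⁻¹ + Z⁻¹ * ((1 + q ^ 2 / s) ^ (N + 1))⁻¹) := by
  have hτ : 0 < t + s := by linarith
  have hNℓ : (N : ℝ) ≤ ℓ := by have : (0 : ℝ) ≤ N := Nat.cast_nonneg N; linarith
  have hℓ0 : 0 ≤ ℓ := (Nat.cast_nonneg N).trans hNℓ
  have i1 := inv_le_of_le_mul hV hA h1
  have i2 := inv_le_of_le_mul hV hB h2
  have i3 := inv_le_of_le_mul hZ hB h3
  have hPd : 0 ≤ p ^ 2 / t := by positivity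
  have hQd : 0 ≤ q ^ 2 / s := by positivity
  have hWd : 0 ≤ D ^ 2 / (t + s) := by positivity
  have ePt : p ^ 2 / (t + s) ≤ p ^ 2 / t := by gcongr; linarith
  have eQt : q ^ 2 / (t + s) ≤ q ^ 2 / s := by gcongr; linarith
  set P := 1 + p ^ 2 / t with hPdef
  set Q := 1 + q ^ 2 / s with hQdef
  set W := 1 + D ^ 2 / (t + s) with hWdef
  have hP : 1 ≤ P := by linarith
  have hQ : 1 ≤ Q := by linarith
  have hW : 1 ≤ W := by linarith
  have hP0 : 0 < P := by linarith
  have hQ0 : 0 < Q := by linarith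
  have hW0 : 0 < W := by linarith
  have aP := rpow_absorb hP hℓ
  have aQ := rpow_absorb hQ hℓ
  have pP : 0 < P ^ (-ℓ) := Real.rpow_pos_of_pos hP0 _
  have pQ : 0 < Q ^ (-ℓ) := Real.rpow_pos_of_pos hQ0 _
  have pW : 0 < W ^ (-ℓ) := Real.rpow_pos_of_pos hW0 _
  have p8 : (0 : ℝ) < 8 ^ ℓ := by positivity
  have n2 : (1 : ℝ) ≤ 2 ^ N := one_le_pow₀ (by norm_num)
  have hK0 : 0 < K := by linarith
  have hKK : K ≤ K ^ 2 := by nlinarith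
  -- The `y`-`z` kernel supplies volume and decay; the `x`-`y` kernel remains.
  have out1 : ∀ f : ℝ, 0 ≤ f → B⁻¹ ≤ K * (f * P ^ N) * V⁻¹ →
      f * Q ^ (-ℓ) ≤ (2 ^ N * 8 ^ ℓ) * W ^ (-ℓ) →
      (A⁻¹ * P ^ (-ℓ)) * (B⁻¹ * Q ^ (-ℓ)) ≤
        (K ^ 2 * (2 ^ N * 8 ^ ℓ)) * (V⁻¹ * W ^ (-ℓ)) *
        (A⁻¹ * (P ^ (N + 1))⁻¹ + Z⁻¹ * (Q ^ (N + 1))⁻¹) := by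
    intro f hf hb hfq
    calc (A⁻¹ * P ^ (-ℓ)) * (B⁻¹ * Q ^ (-ℓ))
        ≤ (A⁻¹ * P ^ (-ℓ)) * ((K * (f * P ^ N) * V⁻¹) * Q ^ (-ℓ)) := by gcongr
      _ = K * V⁻¹ * A⁻¹ * (P ^ N * P ^ (-ℓ)) * (f * Q ^ (-ℓ)) := by ring
      _ ≤ K ^ 2 * V⁻¹ * A⁻¹ * (P ^ (N + 1))⁻¹ * ((2 ^ N * 8 ^ ℓ) * W ^ (-ℓ)) := by gcongr
      _ = (K ^ 2 * (2 ^ N * 8 ^ ℓ)) * (V⁻¹ * W ^ (-ℓ)) * (A⁻¹ * (P ^ (N + 1))⁻¹) := by ring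
      _ ≤ _ := by
        gcongr
        exact le_add_of_nonneg_right (by positivity)
  -- The `x`-`y` kernel supplies volume and decay; the `y`-`z` kernel, recentred at `z`, remains.
  have out2 : ∀ f : ℝ, 0 ≤ f → A⁻¹ ≤ K * f * V⁻¹ →
      f * P ^ (-ℓ) ≤ (2 ^ N * 8 ^ ℓ) * W ^ (-ℓ) →
      (A⁻¹ * P ^ (-ℓ)) * (B⁻¹ * Q ^ (-ℓ)) ≤
        (K ^ 2 * (2 ^ N * 8 ^ ℓ)) * (V⁻¹ * W ^ (-ℓ)) *
        (A⁻¹ * (P ^ (N + 1))⁻¹ + Z⁻¹ * (Q ^ (N + 1))⁻¹) := by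
    intro f hf ha hfp
    calc (A⁻¹ * P ^ (-ℓ)) * (B⁻¹ * Q ^ (-ℓ))
        ≤ ((K * f * V⁻¹) * P ^ (-ℓ)) * ((K * Q ^ N * Z⁻¹) * Q ^ (-ℓ)) := by gcongr
      _ = K ^ 2 * V⁻¹ * Z⁻¹ * (Q ^ N * Q ^ (-ℓ)) * (f * P ^ (-ℓ)) := by ring
      _ ≤ K ^ 2 * V⁻¹ * Z⁻¹ * (Q ^ (N + 1))⁻¹ * ((2 ^ N * 8 ^ ℓ) * W ^ (-ℓ)) := by gcongr
      _ = (K ^ 2 * (2 ^ N * 8 ^ ℓ)) * (V⁻¹ * W ^ (-ℓ)) * (Z⁻¹ * (Q ^ (N + 1))⁻¹) := by ring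
      _ ≤ _ := by
        gcongr
        exact le_add_of_nonneg_left (by positivity)
  have hWsmall : D ^ 2 ≤ t + s → W ≤ 2 := fun h => by
    have := (div_le_one hτ).2 h
    linarith
  have hWp : D ≤ 2 * p → W ≤ 8 * P := fun h => by
    have h4 : D ^ 2 ≤ 4 * p ^ 2 := by
      calc D ^ 2 ≤ (2 * p) ^ 2 := pow_le_pow_left₀ hD h 2
        _ = 4 * p ^ 2 := by ring
    have : D ^ 2 / (t + s) ≤ 4 * (p ^ 2 / (t + s)) := by
      rw [← mul_div_assoc]
      exact div_le_div_of_nonneg_right h4 hτ.le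
    linarith
  have hWq : D ≤ 2 * q → W ≤ 8 * Q := fun h => by
    have h4 : D ^ 2 ≤ 4 * q ^ 2 := by
      calc D ^ 2 ≤ (2 * q) ^ 2 := pow_le_pow_left₀ hD h 2
        _ = 4 * q ^ 2 := by ring
    have : D ^ 2 / (t + s) ≤ 4 * (q ^ 2 / (t + s)) := by
      rw [← mul_div_assoc]
      exact div_le_div_of_nonneg_right h4 hτ.le
    linarith
  -- When `D² > t + s`, the decay also pays for the ratio of the time scales.
  have hgW : ∀ r u : ℝ, 0 < u → t + s < D ^ 2 → D ≤ 2 * r →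
      ((t + s) / u) * W ≤ 8 * (1 + r ^ 2 / u) := fun r u hu hDτ h => by
    have e : ((t + s) / u) * W = (t + s + D ^ 2) / u := by
      rw [hWdef]; field_simp
    rw [e, div_le_iff₀ hu, mul_assoc, add_mul, div_mul_cancel₀ _ hu.ne']
    have h4 : D ^ 2 ≤ 4 * r ^ 2 := by
      calc D ^ 2 ≤ (2 * r) ^ 2 := pow_le_pow_left₀ hD h 2
        _ = 4 * r ^ 2 := by ring
    linarith
  rcases le_total t s with hts | hst
  · by_cases hc : D ^ 2 ≤ t + s ∨ D ≤ 2 * q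
    · have hWQ : W ≤ 8 * Q := by
        rcases hc with hc | hc
        · linarith [hWsmall hc]
        · exact hWq hc
      refine out1 (2 ^ N) (by positivity) (i2.trans ?_) ?_
      · rw [← mul_pow]
        gcongr
        have : p ^ 2 / s ≤ p ^ 2 / t := by gcongr
        have : (t + s) / s ≤ 2 := by rw [div_le_iff₀ hs]; linarith
        rw [add_div]
        linarith
      · rw [mul_assoc]
        gcongr
        exact rpow_neg_le_of_le_mul hQ0 hW0 (by norm_num) hℓ0 hWQ
    · push Not at hc
      refine out2 (((t + s) / t) ^ N) (by positivity) i1 ?_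
      refine (pow_mul_rpow_neg_le hP0 hW0 ?_ hNℓ (hgW p t ht hc.1 (by linarith))).trans ?_
      · rw [one_le_div ht]; linarith
      · gcongr
        exact le_mul_of_one_le_left p8.le n2
  · by_cases hc : D ^ 2 ≤ t + s ∨ D ≤ 2 * p
    · have hWP : W ≤ 8 * P := by
        rcases hc with hc | hc
        · linarith [hWsmall hc]
        · exact hWp hc
      refine out2 (2 ^ N) (by positivity) (i1.trans ?_) ?_
      · gcongr
        rw [div_le_iff₀ ht]; linarith
      · rw [mul_assoc]
        gcongr
        exact rpow_neg_le_of_le_mul hP0 hW0 (by norm_num) hℓ0 hWP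
    · push Not at hc
      refine out1 (((t + s) / s) ^ N) (by positivity) (i2.trans ?_) ?_
      · rw [← mul_pow]
        gcongr
        have e : (t + s + p ^ 2) / s = (t + s) / s * (1 + p ^ 2 / (t + s)) := by field_simp
        rw [e]
        gcongr
        linarith
      · refine (pow_mul_rpow_neg_le hQ0 hW0 ?_ hNℓ (hgW q s hs hc.1 (by linarith))).trans ?_
        · rw [one_le_div hs]; linarith
        · gcongr
          exact le_mul_of_one_le_left p8.le n2

/-- Uniform integrability of the kernel left over in `pointwise_bound`: on the shell
`2^(k-1) √t ≤ d(x,y) < 2^k √t` it is at most a constant times `4^{-k(N+1)} / V(x,t)`, while the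
shell has measure at most `C_D^k V(x,t) ≤ 4^{kN} V(x,t)`. -/
lemma lintegral_H_le {M : Type*} [MetricSpace M] [MeasurableSpace M] [BorelSpace M]
    {μ : Measure M} {C_D : ℝ≥0}
    (hfin : ∀ (x : M) (ρ : ℝ), 0 < ρ → 0 < μ (ball x ρ) ∧ μ (ball x ρ) < ⊤)
    (hd : ∀ (x : M) (ρ : ℝ), 0 < ρ → μ (ball x (2 * ρ)) ≤ C_D * μ (ball x ρ))
    {N : ℕ} (hN : (C_D : ℝ) ≤ 4 ^ N) (x : M) {t : ℝ} (ht : 0 < t) :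
    (∫⁻ y, ENNReal.ofReal
      ((μ (ball x √t)).toReal⁻¹ * ((1 + dist x y ^ 2 / t) ^ (N + 1))⁻¹) ∂μ) ≤
      ENNReal.ofReal (2 * 4 ^ (N + 1)) := by
  have hst : 0 < √t := Real.sqrt_pos.2 ht
  set A := (μ (ball x √t)).toReal with hA
  have hA0 : 0 < A := ENNReal.toReal_pos (hfin x _ hst).1.ne' (hfin x _ hst).2.ne
  have hAe : μ (ball x √t) = ENNReal.ofReal A := (ENNReal.ofReal_toReal (hfin x _ hst).2.ne).symm
  let a : ℕ → ℝ := fun k => A⁻¹ * (4 ^ (N + 1) * ((4 ^ k) ^ (N + 1))⁻¹)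
  have ha : ∀ k, 0 ≤ a k := fun k => by positivity
  have hpt : ∀ y, ENNReal.ofReal (A⁻¹ * ((1 + dist x y ^ 2 / t) ^ (N + 1))⁻¹) ≤
      ∑' k, (ball x (2 ^ k * √t)).indicator (fun _ => ENNReal.ofReal (a k)) y := by
    intro y
    have key : ∃ k : ℕ, y ∈ ball x (2 ^ k * √t) ∧
        A⁻¹ * ((1 + dist x y ^ 2 / t) ^ (N + 1))⁻¹ ≤ a k := by
      have hbd : ∀ k : ℕ, (4 : ℝ) ^ k ≤ 4 * (1 + dist x y ^ 2 / t) →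
          A⁻¹ * ((1 + dist x y ^ 2 / t) ^ (N + 1))⁻¹ ≤ a k := by
        intro k hk
        have hX : 0 < 1 + dist x y ^ 2 / t := by positivity
        simp only [a]
        gcongr
        rw [← div_eq_mul_inv, ← div_pow, ← inv_pow]
        gcongr
        rw [inv_le_iff_one_le_mul₀ hX, div_mul_eq_mul_div, one_le_div (by positivity)]
        exact hk
      rcases lt_or_ge (dist x y) √t with h | h
      · refine ⟨0, by simpa [dist_comm] using h, hbd 0 ?_⟩
        have : 0 ≤ dist x y ^ 2 / t := by positivity
        simp only [pow_zero]
        linarith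
      · obtain ⟨k, hk1, hk2⟩ :=
          exists_nat_pow_near ((one_le_div hst).2 h) (one_lt_two (α := ℝ))
        refine ⟨k + 1, ?_, hbd _ ?_⟩
        · rw [mem_ball, dist_comm]
          exact (div_lt_iff₀ hst).1 hk2
        · have : (4 : ℝ) ^ k ≤ dist x y ^ 2 / t := by
            calc (4 : ℝ) ^ k = (2 ^ k) ^ 2 := by
                  rw [← pow_mul, mul_comm, pow_mul]; norm_num
              _ ≤ (dist x y / √t) ^ 2 := by gcongr
              _ = _ := by rw [div_pow, Real.sq_sqrt ht.le]
          rw [pow_succ]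
          linarith
    obtain ⟨k, hk, hle⟩ := key
    refine (ENNReal.ofReal_le_ofReal hle).trans ?_
    refine le_trans ?_ (ENNReal.le_tsum k)
    rw [Set.indicator_of_mem hk]
  have hC : (C_D : ℝ≥0∞) = ENNReal.ofReal (C_D : ℝ) := by simp
  have hgeo : HasSum (fun k : ℕ => 4 ^ (N + 1) * (1 / 2 : ℝ) ^ k) (4 ^ (N + 1) * 2) :=
    hasSum_geometric_two.mul_left _
  calc _ ≤ ∫⁻ y, ∑' k, (ball x (2 ^ k * √t)).indicator
            (fun _ => ENNReal.ofReal (a k)) y ∂μ := lintegral_mono hpt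
    _ = ∑' k, ENNReal.ofReal (a k) * μ (ball x (2 ^ k * √t)) := by
        rw [lintegral_tsum
          fun k => (measurable_const.indicator measurableSet_ball).aemeasurable]
        congr 1 with k
        rw [lintegral_indicator_const measurableSet_ball]
    _ ≤ ∑' k : ℕ, ENNReal.ofReal (4 ^ (N + 1) * (1 / 2 : ℝ) ^ k) := by
        refine ENNReal.tsum_le_tsum fun k => ?_
        calc _ ≤ ENNReal.ofReal (a k) * ((C_D : ℝ≥0∞) ^ k * μ (ball x √t)) := by
              gcongr; exact doubling_pow hd x hst k
          _ = ENNReal.ofReal (a k * ((C_D : ℝ) ^ k * A)) := by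
              rw [hAe, hC, ← ENNReal.ofReal_pow (by positivity),
                ← ENNReal.ofReal_mul (by positivity), ← ENNReal.ofReal_mul (ha k)]
          _ ≤ _ := by
              apply ENNReal.ofReal_le_ofReal
              have h4 : (C_D : ℝ) ^ k ≤ (4 ^ k) ^ N := by
                rw [← pow_mul, mul_comm, pow_mul]; gcongr
              have e : a k * ((C_D : ℝ) ^ k * A) =
                  4 ^ (N + 1) * (((4 ^ k) ^ (N + 1))⁻¹ * (C_D : ℝ) ^ k) := by
                simp only [a]; field_simp
              rw [e]
              gcongr
              calc ((4 ^ k : ℝ) ^ (N + 1))⁻¹ * (C_D : ℝ) ^ k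
                  ≤ ((4 ^ k) ^ (N + 1))⁻¹ * (4 ^ k) ^ N := by gcongr
                _ = (1 / 4 : ℝ) ^ k := by
                    rw [pow_succ, one_div, inv_pow]; field_simp
                _ ≤ (1 / 2 : ℝ) ^ k := by gcongr; norm_num
    _ = ENNReal.ofReal (2 * 4 ^ (N + 1)) := by
        rw [← ENNReal.ofReal_tsum_of_nonneg (fun k => by positivity) hgeo.summable, hgeo.tsum_eq,
          mul_comm]

lemma Gker_le_Gker_one {M : Type*} [MetricSpace M] [MeasurableSpace M]
    (μ : Measure M) {c ℓ t : ℝ} (hc : 0 < c) (hℓ : 0 ≤ ℓ) (ht : 0 < t) (x y : M) :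
    Gker μ c ℓ t x y ≤ ((min 1 c)⁻¹) ^ ℓ * Gker μ 1 ℓ t x y := by
  have hm : 0 < min 1 c := lt_min one_pos hc
  have hX : 0 ≤ dist x y ^ 2 / t := by positivity
  unfold Gker
  rw [mul_left_comm]
  gcongr
  rw [mul_div_assoc, mul_div_assoc]
  apply rpow_neg_le_of_le_mul (by positivity) (by positivity) (by positivity) hℓ
  rw [inv_mul_eq_div, le_div_iff₀ hm]
  nlinarith [min_le_left 1 c, min_le_right 1 c]

/-- Chapman–Kolmogorov estimate for the reference Gaussian kernels: there is `ℓ₀ > 0`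
depending only on the doubling constant `C_D` such that for every `ℓ ≥ ℓ₀` and `c > 0`
there are `c' > 0` and `C ≥ 0` with
`∫_M G_t^{c,ℓ}(x,y) G_s^{c,ℓ}(y,z) μ(dy) ≤ C · G_{t+s}^{c',ℓ}(x,z)`
for all `s, t ∈ (0,1]` and `x, z ∈ M`. -/
theorem stmt4 (C_D : ℝ≥0) (hC_D : 1 ≤ C_D) :
    ∃ ℓ₀ : ℝ, 0 < ℓ₀ ∧
      ∀ (M : Type) [MetricSpace M] [CompactSpace M] [MeasurableSpace M] [BorelSpace M]
        (μ : Measure M),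
        (∀ (x : M) (ρ : ℝ), 0 < ρ → 0 < μ (ball x ρ) ∧ μ (ball x ρ) < ⊤) →
        (∀ (x : M) (ρ : ℝ), 0 < ρ → μ (ball x (2 * ρ)) ≤ C_D * μ (ball x ρ)) →
        ∀ ℓ, ℓ₀ ≤ ℓ → ∀ c : ℝ, 0 < c →
          ∃ c' : ℝ, 0 < c' ∧ ∃ C : ℝ, 0 ≤ C ∧
            ∀ s ∈ Set.Ioc (0 : ℝ) 1, ∀ t ∈ Set.Ioc (0 : ℝ) 1, ∀ x z : M,
              (∫⁻ y, ENNReal.ofReal (Gker μ c ℓ t x y * Gker μ c ℓ s y z) ∂μ) ≤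
                ENNReal.ofReal (C * Gker μ c' ℓ (t + s) x z) := by
  obtain ⟨N, hN'⟩ := pow_unbounded_of_one_lt (C_D : ℝ) (by norm_num : (1 : ℝ) < 4)
  have hN : (C_D : ℝ) ≤ 4 ^ N := hN'.le
  refine ⟨2 * N + 1, by positivity, ?_⟩
  intro M _ _ _ _ μ hfin hd ℓ hℓ c hc
  have hℓ0 : 0 ≤ ℓ := le_trans (by positivity) hℓ
  have hm : 0 < min 1 c := lt_min one_pos hc
  set m : ℝ := ((min 1 c)⁻¹) ^ ℓ with hmdef
  have hm0 : 0 < m := by positivity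
  set K : ℝ := C_D * 2 ^ N with hKdef
  have hCr : (1 : ℝ) ≤ C_D := by exact_mod_cast hC_D
  have hK : 1 ≤ K := one_le_mul_of_one_le_of_one_le hCr (one_le_pow₀ (by norm_num))
  set L : ℝ := K ^ 2 * (2 ^ N * 8 ^ ℓ) with hLdef
  have hL : 0 ≤ L := by positivity
  refine ⟨1, one_pos, m * m * L * (2 * (2 * 4 ^ (N + 1))), by positivity, ?_⟩
  rintro s ⟨hs, -⟩ t ⟨ht, -⟩ x z
  have hV : ∀ (w : M) (u : ℝ), 0 < u → 0 < (μ (ball w √u)).toReal := fun w u hu =>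
    ENNReal.toReal_pos (hfin w _ (Real.sqrt_pos.2 hu)).1.ne' (hfin w _ (Real.sqrt_pos.2 hu)).2.ne
  have hτ : 0 < t + s := by linarith
  have hG0 : ∀ (u : ℝ) (w v : M), 0 < u → 0 ≤ Gker μ 1 ℓ u w v := fun u w v hu => by
    unfold Gker; positivity
  let H : ℝ → M → M → ℝ := fun u w y =>
    (μ (ball w √u)).toReal⁻¹ * ((1 + dist w y ^ 2 / u) ^ (N + 1))⁻¹
  have hH0 : ∀ u w y, 0 < u → 0 ≤ H u w y := fun u w y hu => by
    simp only [H]; positivity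
  have hpt : ∀ y, Gker μ c ℓ t x y * Gker μ c ℓ s y z ≤
      (m * m * L * Gker μ 1 ℓ (t + s) x z) * (H t x y + H s z y) := by
    intro y
    have h1 := vol_compare hfin hd hN x x ht (show t ≤ t + s by linarith)
    have h2 := vol_compare hfin hd hN x y hs (show s ≤ t + s by linarith)
    have h3 := vol_compare hfin hd hN z y hs le_rfl
    rw [dist_self, zero_pow two_ne_zero, add_zero] at h1
    rw [add_div, div_self hs.ne', dist_comm z y] at h3
    have key := pointwise_bound (hV x t ht) (hV y s hs) (hV z s hs) (hV x _ hτ) hK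
      (dist_nonneg (x := x) (y := z)) hs ht hℓ (dist_triangle x y z) h1 h2 h3
    have key' : Gker μ 1 ℓ t x y * Gker μ 1 ℓ s y z ≤
        L * Gker μ 1 ℓ (t + s) x z * (H t x y + H s z y) := by
      simpa only [Gker, H, one_mul, dist_comm z y] using key
    have hg : 0 ≤ Gker μ c ℓ s y z := by unfold Gker; positivity
    calc Gker μ c ℓ t x y * Gker μ c ℓ s y z
        ≤ (m * Gker μ 1 ℓ t x y) * (m * Gker μ 1 ℓ s y z) :=
          mul_le_mul (Gker_le_Gker_one μ hc hℓ0 ht x y) (Gker_le_Gker_one μ hc hℓ0 hs y z) hg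
            (mul_nonneg hm0.le (hG0 t x y ht))
      _ = m * m * (Gker μ 1 ℓ t x y * Gker μ 1 ℓ s y z) := by ring
      _ ≤ m * m * (L * Gker μ 1 ℓ (t + s) x z * (H t x y + H s z y)) := by gcongr
      _ = _ := by ring
  have hQ0 : 0 ≤ m * m * L * Gker μ 1 ℓ (t + s) x z :=
    mul_nonneg (by positivity) (hG0 _ x z hτ)
  have hmeas : Measurable fun y => ENNReal.ofReal (H t x y) := by
    simp only [H]
    fun_prop
  calc _ ≤ ∫⁻ y, ENNReal.ofReal (m * m * L * Gker μ 1 ℓ (t + s) x z) *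
            (ENNReal.ofReal (H t x y) + ENNReal.ofReal (H s z y)) ∂μ := by
        refine lintegral_mono fun y => ?_
        rw [← ENNReal.ofReal_add (hH0 t x y ht) (hH0 s z y hs), ← ENNReal.ofReal_mul hQ0]
        exact ENNReal.ofReal_le_ofReal (hpt y)
    _ = ENNReal.ofReal (m * m * L * Gker μ 1 ℓ (t + s) x z) *
          ((∫⁻ y, ENNReal.ofReal (H t x y) ∂μ) + ∫⁻ y, ENNReal.ofReal (H s z y) ∂μ) := by
        rw [lintegral_const_mul' _ _ ENNReal.ofReal_ne_top, lintegral_add_left hmeas]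
    _ ≤ ENNReal.ofReal (m * m * L * Gker μ 1 ℓ (t + s) x z) *
          (ENNReal.ofReal (2 * 4 ^ (N + 1)) + ENNReal.ofReal (2 * 4 ^ (N + 1))) := by
        gcongr
        · exact lintegral_H_le hfin hd hN x ht
        · exact lintegral_H_le hfin hd hN z hs
    _ = _ := by
        rw [← ENNReal.ofReal_add (by positivity) (by positivity), ← ENNReal.ofReal_mul hQ0]
        congr 1
        ring
end
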